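/- arXiv:0708.2138 — 2 statements merged into one kernel-verified Lean document; each statement's English description precedes it below -/
import Mathlib

section
/- Let α_1, …, α_l be linearly independent vectors in a real inner product space V such that (α_i, α_j) ≤ 0 for all i ≠ j. Let I be a nonempty subset of {1, …, l} and let μ = Σ_{i∈I} m_i α_i − Σ_{i∉I} m_i α_i, where the m_i are rational numbers with m_i > 0 for all i ∈ I and m_i ≥ 0 for all i ∉ I. Then there exists i ∈ I such that (μ, α_i) > 0; consequently, for this i, the reflection s_{α_i}(μ) = μ − (2(μ,α_i)/(α_i,α_i))·α_i satisfies μ − s_{α_i}(μ) = c·α_i with c > 0. -/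
open scoped RealInnerProductSpace

/-!
Split `μ = ν - ρ` into its part `ν` over `I` and its part `ρ` over the complement.  Obtuseness
makes `⟪ρ, ν⟫ ≤ 0` and linear independence makes `ν ≠ 0`, so `⟪μ, ν⟫ ≥ ⟪ν, ν⟫ > 0`.  As `ν` is a
nonnegative combination of the `α i` with `i ∈ I`, some `⟪μ, α i⟫` with `i ∈ I` is positive.
-/

theorem sum_smul_ne_zero_of_linearIndepOn {R M ι : Type*} [Ring R] [AddCommGroup M] [Module R M]
    {s : Finset ι} {v : ι → M} {a : ι → R} {i : ι} (hv : LinearIndepOn R v s) (hi : i ∈ s)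
    (hai : a i ≠ 0) : ∑ j ∈ s, a j • v j ≠ 0 :=
  fun h => hai (linearIndepOn_finset_iff.mp hv a h i hi)

section SemiInnerProduct

variable {V ι κ : Type*} [SeminormedAddCommGroup V] [InnerProductSpace ℝ V]
  {s : Finset ι} {t : Finset κ} {a : ι → ℝ} {b : κ → ℝ} {v : ι → V} {w : κ → V} {x y : V}

theorem inner_sum_smul_nonpos (ha : ∀ i ∈ s, 0 ≤ a i) (hxv : ∀ i ∈ s, ⟪x, v i⟫ ≤ 0) :
    ⟪x, ∑ i ∈ s, a i • v i⟫ ≤ 0 := by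
  simp only [inner_sum, real_inner_smul_right]
  exact Finset.sum_nonpos fun i hi => mul_nonpos_of_nonneg_of_nonpos (ha i hi) (hxv i hi)

theorem exists_inner_pos_of_inner_sum_smul_pos (ha : ∀ i ∈ s, 0 ≤ a i)
    (hx : 0 < ⟪x, ∑ i ∈ s, a i • v i⟫) : ∃ i ∈ s, 0 < ⟪x, v i⟫ := by
  contrapose! hx
  exact inner_sum_smul_nonpos ha hx

theorem inner_sum_smul_sum_smul_nonpos (ha : ∀ i ∈ s, 0 ≤ a i) (hb : ∀ j ∈ t, 0 ≤ b j)
    (hvw : ∀ i ∈ s, ∀ j ∈ t, ⟪v i, w j⟫ ≤ 0) :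
    ⟪∑ i ∈ s, a i • v i, ∑ j ∈ t, b j • w j⟫ ≤ 0 := by
  refine inner_sum_smul_nonpos hb fun j hj => ?_
  rw [real_inner_comm]
  refine inner_sum_smul_nonpos ha fun i hi => ?_
  rw [real_inner_comm]
  exact hvw i hi j hj

theorem inner_sub_left_self_pos (hx : ‖x‖ ≠ 0) (hxy : ⟪x, y⟫ ≤ 0) : 0 < ⟪x - y, x⟫ := by
  have hxx : 0 < ⟪x, x⟫ := by
    rw [real_inner_self_eq_norm_sq]
    positivity
  rw [inner_sub_left, real_inner_comm x y]
  linarith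

theorem inner_self_pos_of_inner_pos (hxy : 0 < ⟪x, y⟫) : 0 < ⟪y, y⟫ := by
  have hy : 0 < ‖y‖ :=
    pos_of_mul_pos_right (hxy.trans_le (real_inner_le_norm x y)) (norm_nonneg x)
  rw [real_inner_self_eq_norm_sq]
  positivity

theorem stmt0_general {α : ι → V} {I J : Finset ι} {m : ι → ℝ}
    (hobtuse : ∀ i ∈ I, ∀ j ∈ J, ⟪α i, α j⟫ ≤ 0)
    (hI : ∀ i ∈ I, 0 ≤ m i) (hJ : ∀ j ∈ J, 0 ≤ m j) (hne : ‖∑ i ∈ I, m i • α i‖ ≠ 0)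
    {μ : V} (hμ : μ = (∑ i ∈ I, m i • α i) - ∑ j ∈ J, m j • α j) :
    ∃ i ∈ I, 0 < ⟪μ, α i⟫ ∧
      ∃ c : ℝ, 0 < c ∧
        μ - (μ - (2 * ⟪μ, α i⟫ / ⟪α i, α i⟫) • α i) = c • α i := by
  have hμν : 0 < ⟪μ, ∑ i ∈ I, m i • α i⟫ :=
    hμ ▸ inner_sub_left_self_pos hne (inner_sum_smul_sum_smul_nonpos hI hJ hobtuse)
  obtain ⟨i, hi, hμi⟩ := exists_inner_pos_of_inner_sum_smul_pos hI hμν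
  have hαi : 0 < ⟪α i, α i⟫ := inner_self_pos_of_inner_pos hμi
  exact ⟨i, hi, hμi, _, by positivity, sub_sub_cancel _ _⟩

end SemiInnerProduct

/-- Let `α 1, …, α l` be linearly independent vectors in a real inner
product space `V` with `⟪α i, α j⟫ ≤ 0` for `i ≠ j`.  Let `I` be a nonempty subset of
indices and `μ = ∑_{i ∈ I} m i • α i − ∑_{i ∉ I} m i • α i` with rational `m i > 0` on `I`
and `m i ≥ 0` off `I`.  Then there is `i ∈ I` with `⟪μ, α i⟫ > 0`; consequently
`μ − s_{α i}(μ) = c • α i` with `c > 0`, where `s_{α i}(μ) = μ − (2⟪μ,α i⟫/⟪α i,α i⟫) • α i`. -/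
theorem stmt0 {V : Type*} [NormedAddCommGroup V] [InnerProductSpace ℝ V]
    (l : ℕ) (α : Fin l → V) (hindep : LinearIndependent ℝ α)
    (hobtuse : ∀ i j, i ≠ j → ⟪α i, α j⟫ ≤ 0)
    (I : Finset (Fin l)) (hI : I.Nonempty)
    (m : Fin l → ℚ) (hpos : ∀ i ∈ I, 0 < m i) (hnonneg : ∀ i ∉ I, 0 ≤ m i)
    (μ : V) (hμ : μ = (∑ i ∈ I, (m i : ℝ) • α i) - ∑ i ∈ Iᶜ, (m i : ℝ) • α i) :
    ∃ i ∈ I, 0 < ⟪μ, α i⟫ ∧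
      ∃ c : ℝ, 0 < c ∧
        μ - (μ - (2 * ⟪μ, α i⟫ / ⟪α i, α i⟫) • α i) = c • α i := by
  obtain ⟨k, hk⟩ := hI
  have hne : ∑ i ∈ I, (m i : ℝ) • α i ≠ 0 :=
    sum_smul_ne_zero_of_linearIndepOn (hindep.linearIndepOn (s := I)) hk
      (Rat.cast_ne_zero.mpr (hpos k hk).ne')
  exact stmt0_general
    (fun i hi j hj => hobtuse i j (ne_of_mem_of_not_mem hi (Finset.mem_compl.mp hj)))
    (fun i hi => Rat.cast_nonneg.mpr (hpos i hi).le)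
    (fun j hj => Rat.cast_nonneg.mpr (hnonneg j (Finset.mem_compl.mp hj)))
    (norm_ne_zero_iff.mpr hne) hμ
end

section
/- Let ω be a minuscule weight, I = {α ∈ S : ⟨ω, α∨⟩ = 0} and W^I = {w ∈ W : w(α) > 0 for all α ∈ I}. Write ω = Σ_{i=1}^l m_i α_i. Then for any w ∈ W^I and any reduced expression w = s_{i_1}·s_{i_2}⋯s_{i_k}, the number of indices j ∈ {1,…,k} with i_j = i equals m_i minus the coefficient of α_i in w(ω); in particular, the number of times s_i appears in a reduced expression of w is independent of the chosen reduced expression. -/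
open scoped RealInnerProductSpace

/-- A finite reduced crystallographic root system `Φ` spanning a real inner product
space `V`, together with a fixed base of simple roots `α 0, …, α (l-1)`: every root is
a nonnegative or nonpositive integral combination of the simple roots.  The simple
reflections `s i` are given by the usual formula `s_α(λ) = λ − ⟨λ, α∨⟩ α`. -/
structure RootSystemWithBase (V : Type*) [NormedAddCommGroup V] [InnerProductSpace ℝ V] where
  l : ℕ
  Φ : Finset V
  α : Fin l → V
  s : Fin l → V ≃ₗ[ℝ] V
  α_mem : ∀ i, α i ∈ Φ
  root_ne_zero : ∀ β ∈ Φ, β ≠ (0 : V)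
  root_span : Submodule.span ℝ (Φ : Set V) = ⊤
  simple_indep : LinearIndependent ℝ α
  crystallographic : ∀ β ∈ Φ, ∀ γ ∈ Φ, ∃ z : ℤ, 2 * ⟪β, γ⟫ / ⟪γ, γ⟫ = (z : ℝ)
  reduced : ∀ β ∈ Φ, ∀ c : ℝ, c • β ∈ Φ → c = 1 ∨ c = -1
  base : ∀ β ∈ Φ,
    (∃ c : Fin l → ℤ, (∀ i, 0 ≤ c i) ∧ β = ∑ i, (c i : ℝ) • α i) ∨
    (∃ c : Fin l → ℤ, (∀ i, 0 ≤ c i) ∧ β = -(∑ i, (c i : ℝ) • α i))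
  s_apply : ∀ i v, s i v = v - (2 * ⟪v, α i⟫ / ⟪α i, α i⟫) • α i
  s_root : ∀ β ∈ Φ, ∀ i, s i β ∈ Φ

namespace RootSystemWithBase

variable {V : Type*} [NormedAddCommGroup V] [InnerProductSpace ℝ V]

/-- The pairing `⟨λ, β∨⟩ = 2(λ,β)/(β,β)`. -/
noncomputable def pairing (_D : RootSystemWithBase V) (lam β : V) : ℝ :=
  2 * ⟪lam, β⟫ / ⟪β, β⟫

/-- The Weyl group: the subgroup of `GL(V)` generated by the simple reflections. -/
def W (D : RootSystemWithBase V) : Subgroup (V ≃ₗ[ℝ] V) := Subgroup.closure (Set.range D.s)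

/-- The product `s_{i₁} · s_{i₂} ⋯ s_{i_k}` of simple reflections along a word. -/
def wordProd (D : RootSystemWithBase V) (L : List (Fin D.l)) : V ≃ₗ[ℝ] V := (L.map D.s).prod

/-- The length `ℓ(w)`: the least `k` such that `w` is a product of `k` simple
reflections. -/
noncomputable def len (D : RootSystemWithBase V) (w : V ≃ₗ[ℝ] V) : ℕ :=
  sInf {k | ∃ L : List (Fin D.l), L.length = k ∧ D.wordProd L = w}

/-- `v` is a linear combination of the simple roots with all coefficients `≥ 0`. -/
def IsNonnegComb (D : RootSystemWithBase V) (v : V) : Prop :=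
  ∃ c : Fin D.l → ℝ, (∀ i, 0 ≤ c i) ∧ v = ∑ i, c i • D.α i

/-- `v > 0`: a nonzero nonnegative combination of the simple roots. -/
def IsPos (D : RootSystemWithBase V) (v : V) : Prop := D.IsNonnegComb v ∧ v ≠ 0

/-- `x ≤ y` for vectors: `y − x` is a nonnegative combination of the simple roots. -/
def vle (D : RootSystemWithBase V) (x y : V) : Prop := D.IsNonnegComb (y - x)

/-- `λ` is dominant: `⟨λ, αᵢ∨⟩ ≥ 0` for all `i`. -/
def IsDominant (D : RootSystemWithBase V) (lam : V) : Prop :=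
  ∀ i, 0 ≤ D.pairing lam (D.α i)

/-- `ω` is minuscule: dominant with `⟨ω, β∨⟩ ∈ {−1, 0, 1}` for every root `β`. -/
def IsMinuscule (D : RootSystemWithBase V) (ω : V) : Prop :=
  D.IsDominant ω ∧ ∀ β ∈ D.Φ, D.pairing ω β = -1 ∨ D.pairing ω β = 0 ∨ D.pairing ω β = 1

/-- `W^I = {w ∈ W : w(α) > 0 for all α ∈ I}` where `I = {α ∈ S : ⟨ω, α∨⟩ = 0}`. -/
def WI (D : RootSystemWithBase V) (ω : V) : Set (V ≃ₗ[ℝ] V) :=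
  {w | w ∈ D.W ∧ ∀ i, D.pairing ω (D.α i) = 0 → D.IsPos (w (D.α i))}

/-- `w ≤ τ` in `W`:  `ℓ(τ) = ℓ(w) + ℓ(τ w⁻¹)`. -/
def wle (D : RootSystemWithBase V) (w τ : V ≃ₗ[ℝ] V) : Prop :=
  D.len τ = D.len w + D.len (τ * w⁻¹)

end RootSystemWithBase

/-!
Read a reduced word of `w ∈ W^I` from right to left. Passing from a suffix `u` to `s_j u`
changes `u(ω)` by `-⟨u(ω), α_j∨⟩ α_j = -⟨ω, γ∨⟩ α_j`, where `γ = u⁻¹(α_j)`. Since the word is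
reduced, `γ` is a positive root, and `s_j u` sends it to `-α_j`. If `s_j u` is in `W^I`, then so is
`u`: a root `α_i ∈ I` that `u` makes negative but `s_j u` does not is `-γ`, and `γ > 0`.
An element of `W^I` cannot make a positive root orthogonal to `ω` negative, so `⟨ω, γ∨⟩ ≠ 0`, and
as `ω` is dominant and minuscule, `⟨ω, γ∨⟩ = 1`. So each letter `j` lowers the coefficient of `α_j`
by exactly one.
-/

namespace RootSystemWithBase

variable {V : Type*} [NormedAddCommGroup V] [InnerProductSpace ℝ V] (D : RootSystemWithBase V)

lemma span_range_α : Submodule.span ℝ (Set.range D.α) = ⊤ := by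
  have sum_mem (c : Fin D.l → ℤ) :
      ∑ i, (c i : ℝ) • D.α i ∈ Submodule.span ℝ (Set.range D.α) :=
    Submodule.sum_smul_mem _ _ fun i _ => Submodule.subset_span ⟨i, rfl⟩
  rw [eq_top_iff, ← D.root_span, Submodule.span_le]
  intro β hβ
  rcases D.base β hβ with ⟨c, -, rfl⟩ | ⟨c, -, rfl⟩
  exacts [sum_mem c, neg_mem (sum_mem c)]

/-- The simple roots as a basis of `V`, so that "the coefficient of `α i` in `v`" is
`D.simpleBasis.repr v i`. -/
noncomputable def simpleBasis : Module.Basis (Fin D.l) ℝ V :=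
  .mk D.simple_indep D.span_range_α.ge

@[simp]
lemma simpleBasis_apply (i : Fin D.l) : D.simpleBasis i = D.α i :=
  Module.Basis.mk_apply _ _ i

lemma sum_repr_smul_α (v : V) : ∑ i, D.simpleBasis.repr v i • D.α i = v := by
  simpa only [simpleBasis_apply] using D.simpleBasis.sum_repr v

lemma repr_sum_smul_α (c : Fin D.l → ℝ) : ⇑(D.simpleBasis.repr (∑ i, c i • D.α i)) = c := by
  simpa only [simpleBasis_apply] using D.simpleBasis.repr_sum_self c

lemma repr_α (i : Fin D.l) : D.simpleBasis.repr (D.α i) = Finsupp.single i 1 := by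
  rw [← simpleBasis_apply, D.simpleBasis.repr_self]

variable {D}

lemma isNonnegComb_iff {v : V} : D.IsNonnegComb v ↔ ∀ i, 0 ≤ D.simpleBasis.repr v i := by
  refine ⟨?_, fun h => ⟨_, h, (D.sum_repr_smul_α v).symm⟩⟩
  rintro ⟨c, hc, rfl⟩
  rwa [repr_sum_smul_α]

lemma isNonnegComb_sum {ι : Type*} {t : Finset ι} {f : ι → V}
    (h : ∀ k ∈ t, D.IsNonnegComb (f k)) : D.IsNonnegComb (∑ k ∈ t, f k) := by
  simp only [isNonnegComb_iff, map_sum, Finsupp.finsetSum_apply] at h ⊢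
  exact fun i => Finset.sum_nonneg fun k hk => h k hk i

lemma IsNonnegComb.smul {a : ℝ} (ha : 0 ≤ a) {v : V} (hv : D.IsNonnegComb v) :
    D.IsNonnegComb (a • v) := by
  simp only [isNonnegComb_iff, map_smul, Finsupp.smul_apply, smul_eq_mul] at hv ⊢
  exact fun i => mul_nonneg ha (hv i)

lemma IsNonnegComb.eq_zero_of_neg {v : V} (hv : D.IsNonnegComb v) (hv' : D.IsNonnegComb (-v)) :
    v = 0 := by
  rw [isNonnegComb_iff] at hv hv'
  refine D.simpleBasis.ext_elem fun i => ?_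
  have := hv' i
  rw [map_neg, Finsupp.neg_apply, neg_nonneg] at this
  rw [map_zero, Finsupp.zero_apply]
  exact this.antisymm (hv i)

lemma isNonnegComb_α (i : Fin D.l) : D.IsNonnegComb (D.α i) := by
  rw [isNonnegComb_iff, repr_α]
  intro k
  rw [Finsupp.single_apply]
  split_ifs <;> norm_num

lemma isNonnegComb_or_neg {β : V} (hβ : β ∈ D.Φ) : D.IsNonnegComb β ∨ D.IsNonnegComb (-β) := by
  rcases D.base β hβ with ⟨c, hc, rfl⟩ | ⟨c, hc, rfl⟩
  · exact .inl ⟨_, fun i => Int.cast_nonneg (hc i), rfl⟩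
  · exact .inr ⟨_, fun i => Int.cast_nonneg (hc i), neg_neg _⟩

lemma α_ne_zero (i : Fin D.l) : D.α i ≠ 0 :=
  D.root_ne_zero _ (D.α_mem i)

lemma pairing_eq_zero_iff {u v : V} : D.pairing u v = 0 ↔ ⟪u, v⟫ = 0 := by
  rcases eq_or_ne v 0 with rfl | hv
  · simp [pairing]
  · simp [pairing, hv]

lemma pairing_nonneg_iff {u v : V} : 0 ≤ D.pairing u v ↔ 0 ≤ ⟪u, v⟫ := by
  rcases eq_or_ne v 0 with rfl | hv
  · simp [pairing]
  · rw [pairing, le_div_iff₀ (real_inner_self_pos.mpr hv), zero_mul,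
      mul_nonneg_iff_of_pos_left two_pos]

lemma inner_eq_sum_repr_mul (u v : V) :
    ⟪u, v⟫ = ∑ i, D.simpleBasis.repr v i * ⟪u, D.α i⟫ := by
  conv_lhs => rw [← D.sum_repr_smul_α v]
  simp only [inner_sum, real_inner_smul_right]

lemma IsDominant.inner_α_nonneg {ω : V} (hω : D.IsDominant ω) (i : Fin D.l) :
    0 ≤ ⟪ω, D.α i⟫ :=
  pairing_nonneg_iff.mp (hω i)

lemma IsDominant.pairing_nonneg {ω v : V} (hω : D.IsDominant ω) (hv : D.IsNonnegComb v) :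
    0 ≤ D.pairing ω v := by
  rw [pairing_nonneg_iff, inner_eq_sum_repr_mul]
  exact Finset.sum_nonneg fun i _ => mul_nonneg (isNonnegComb_iff.mp hv i) (hω.inner_α_nonneg i)

section Reflections

lemma s_eq_reflection (i : Fin D.l) (v : V) : D.s i v = (ℝ ∙ D.α i)ᗮ.reflection v := by
  rw [D.s_apply, Submodule.reflection_orthogonal_apply, Submodule.reflection_singleton_apply,
    neg_sub, ← Nat.cast_smul_eq_nsmul ℝ, smul_smul, real_inner_comm, real_inner_self_eq_norm_sq]
  norm_num [mul_div_assoc]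

lemma s_apply_eq_sub_pairing (i : Fin D.l) (v : V) :
    D.s i v = v - D.pairing v (D.α i) • D.α i :=
  D.s_apply i v

lemma s_apply_α (i : Fin D.l) : D.s i (D.α i) = -D.α i := by
  rw [s_eq_reflection, Submodule.reflection_orthogonalComplement_singleton_eq_neg]

lemma neg_α_mem_Φ (i : Fin D.l) : -D.α i ∈ D.Φ :=
  s_apply_α i ▸ D.s_root _ (D.α_mem i) i

lemma s_mul_s (i : Fin D.l) : D.s i * D.s i = 1 := by
  ext v
  simp only [LinearEquiv.mul_apply, s_eq_reflection, Submodule.reflection_reflection,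
    LinearEquiv.coe_one, id]

lemma inv_s (i : Fin D.l) : (D.s i)⁻¹ = D.s i :=
  inv_eq_of_mul_eq_one_left (s_mul_s i)

lemma repr_s_apply_of_ne {i j : Fin D.l} (hij : i ≠ j) (v : V) :
    D.simpleBasis.repr (D.s j v) i = D.simpleBasis.repr v i := by
  simp [s_apply_eq_sub_pairing, repr_α, hij]

lemma eq_α_of_not_isNonnegComb_s_apply {β : V} (hβ : β ∈ D.Φ) (hβ₀ : D.IsNonnegComb β)
    {j : Fin D.l} (hj : ¬ D.IsNonnegComb (D.s j β)) : β = D.α j := by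
  have repr_eq_zero (i : Fin D.l) (hij : i ≠ j) : D.simpleBasis.repr β i = 0 := by
    have := isNonnegComb_iff.mp ((isNonnegComb_or_neg (D.s_root β hβ j)).resolve_left hj) i
    rw [map_neg, Finsupp.neg_apply, repr_s_apply_of_ne hij, neg_nonneg] at this
    exact this.antisymm (isNonnegComb_iff.mp hβ₀ i)
  have hβj : β = D.simpleBasis.repr β j • D.α j := by
    conv_lhs => rw [← D.sum_repr_smul_α β]
    exact Fintype.sum_eq_single j fun i hij => by rw [repr_eq_zero i hij, zero_smul]
  rcases D.reduced _ (D.α_mem j) _ (hβj ▸ hβ) with h | h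
  · rwa [h, one_smul] at hβj
  · linarith [isNonnegComb_iff.mp hβ₀ j]

end Reflections

section WeylGroup

variable {w : V ≃ₗ[ℝ] V}

lemma s_mem_W (i : Fin D.l) : D.s i ∈ D.W :=
  Subgroup.subset_closure ⟨i, rfl⟩

lemma inner_apply_apply_of_mem_W (hw : w ∈ D.W) (u v : V) : ⟪w u, w v⟫ = ⟪u, v⟫ := by
  induction hw using Subgroup.closure_induction generalizing u v with
  | mem _ h =>
    obtain ⟨i, rfl⟩ := h
    rw [s_eq_reflection, s_eq_reflection, LinearIsometryEquiv.inner_map_map]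
  | one => rfl
  | mul _ _ _ _ hx hy => exact (hx _ _).trans (hy u v)
  | inv x _ hx => simpa only [LinearEquiv.coe_inv, LinearEquiv.apply_symm_apply] using
      (hx (x⁻¹ u) (x⁻¹ v)).symm

lemma pairing_apply_apply_of_mem_W (hw : w ∈ D.W) (u v : V) :
    D.pairing (w u) (w v) = D.pairing u v := by
  simp only [pairing, inner_apply_apply_of_mem_W hw]

lemma apply_mem_Φ_of_mem_W (hw : w ∈ D.W) {β : V} (hβ : β ∈ D.Φ) : w β ∈ D.Φ := by
  induction hw using Subgroup.closure_induction'' generalizing β with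
  | mem _ h =>
    obtain ⟨i, rfl⟩ := h
    exact D.s_root β hβ i
  | inv_mem _ h =>
    obtain ⟨i, rfl⟩ := h
    rw [inv_s]
    exact D.s_root β hβ i
  | one => exact hβ
  | mul _ _ _ _ hx hy => exact hx (hy hβ)

lemma s_mul_eq_mul_s (hw : w ∈ D.W) {i j : Fin D.l} (h : w (D.α i) = D.α j) :
    D.s j * w = w * D.s i := by
  ext v
  simp only [LinearEquiv.mul_apply, s_apply_eq_sub_pairing, map_sub, map_smul]
  rw [← h, pairing_apply_apply_of_mem_W hw]

end WeylGroup

section Words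

variable {j : Fin D.l} {B : List (Fin D.l)}

lemma wordProd_cons (j : Fin D.l) (B : List (Fin D.l)) :
    D.wordProd (j :: B) = D.s j * D.wordProd B := by
  simp only [wordProd, List.map_cons, List.prod_cons]

lemma wordProd_concat (B : List (Fin D.l)) (i : Fin D.l) :
    D.wordProd (B ++ [i]) = D.wordProd B * D.s i := by
  simp only [wordProd, List.map_append, List.map_singleton, List.prod_append, List.prod_singleton]

lemma wordProd_mem_W (B : List (Fin D.l)) : D.wordProd B ∈ D.W := by
  refine Subgroup.list_prod_mem _ fun x hx => ?_
  obtain ⟨i, -, rfl⟩ := List.mem_map.mp hx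
  exact s_mem_W i

lemma exists_wordProd_cons_eq_eraseIdx
    (h : ¬ D.IsNonnegComb ((D.wordProd B)⁻¹ (D.α j))) :
    ∃ k < B.length, D.wordProd (j :: B) = D.wordProd (B.eraseIdx k) := by
  induction B using List.reverseRecOn with
  | nil => exact absurd (isNonnegComb_α j) h
  | append_singleton B i ih =>
    by_cases hB : D.IsNonnegComb ((D.wordProd B)⁻¹ (D.α j))
    · have hBW := wordProd_mem_W B
      rw [wordProd_concat, mul_inv_rev, inv_s, LinearEquiv.mul_apply] at h
      have hi : (D.wordProd B)⁻¹ (D.α j) = D.α i :=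
        eq_α_of_not_isNonnegComb_s_apply (apply_mem_Φ_of_mem_W (inv_mem hBW) (D.α_mem j)) hB h
      have hcomm : D.s j * D.wordProd B = D.wordProd B * D.s i :=
        s_mul_eq_mul_s hBW ((LinearEquiv.symm_apply_eq _).mp hi).symm
      refine ⟨B.length, by simp, ?_⟩
      rw [List.eraseIdx_append_of_length_le le_rfl, wordProd_cons, wordProd_concat, ← mul_assoc,
        hcomm, mul_assoc, s_mul_s]
      simp
    · obtain ⟨k, hk, hprod⟩ := ih hB
      refine ⟨k, by simpa using hk.le, ?_⟩
      rw [List.eraseIdx_append_of_lt_length hk, ← List.cons_append, wordProd_concat,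
        wordProd_concat, hprod]

variable (D) in
/-- The word `B` is a reduced expression of the Weyl group element it represents. -/
def IsReduced (B : List (Fin D.l)) : Prop :=
  B.length = D.len (D.wordProd B)

lemma len_wordProd_le (B : List (Fin D.l)) : D.len (D.wordProd B) ≤ B.length :=
  Nat.sInf_le ⟨B, rfl, rfl⟩

lemma exists_length_eq_len (B : List (Fin D.l)) :
    ∃ M : List (Fin D.l), M.length = D.len (D.wordProd B) ∧ D.wordProd M = D.wordProd B :=
  Nat.sInf_mem (s := {k | ∃ M : List (Fin D.l), M.length = k ∧ D.wordProd M = D.wordProd B})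
    ⟨_, B, rfl, rfl⟩

lemma IsReduced.length_le (hB : D.IsReduced B) {M : List (Fin D.l)}
    (hM : D.wordProd B = D.wordProd M) : B.length ≤ M.length := by
  rw [hB, hM]
  exact len_wordProd_le M

lemma IsReduced.of_cons (h : D.IsReduced (j :: B)) : D.IsReduced B := by
  obtain ⟨M, hlen, hM⟩ := exists_length_eq_len B
  have : (j :: B).length ≤ (j :: M).length := h.length_le (by rw [wordProd_cons, wordProd_cons, hM])
  refine le_antisymm ?_ (len_wordProd_le B)
  rw [← hlen]
  exact Nat.le_of_succ_le_succ this

lemma IsReduced.isNonnegComb_inv_apply (h : D.IsReduced (j :: B)) :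
    D.IsNonnegComb ((D.wordProd B)⁻¹ (D.α j)) := by
  by_contra hneg
  obtain ⟨k, hk, hprod⟩ := exists_wordProd_cons_eq_eraseIdx hneg
  have := h.length_le hprod
  rw [List.length_eraseIdx_of_lt hk, List.length_cons] at this
  omega

end Words

section MinimalCosetRepresentatives

variable {ω : V} {w : V ≃ₗ[ℝ] V}

lemma isNonnegComb_apply_of_pairing_eq_zero (hω : D.IsDominant ω) (hw : w ∈ D.WI ω) {v : V}
    (hv : D.IsNonnegComb v) (hωv : D.pairing ω v = 0) : D.IsNonnegComb (w v) := by
  rw [isNonnegComb_iff] at hv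
  rw [pairing_eq_zero_iff, inner_eq_sum_repr_mul, Finset.sum_eq_zero_iff_of_nonneg
    fun i _ => mul_nonneg (hv i) (hω.inner_α_nonneg i)] at hωv
  rw [← D.sum_repr_smul_α v, map_sum]
  refine isNonnegComb_sum fun i hi => ?_
  rw [map_smul]
  rcases mul_eq_zero.mp (hωv i hi) with hi | hi
  · rw [hi, zero_smul]
    exact ⟨0, fun _ => le_rfl, by simp⟩
  · exact (hw.2 i (pairing_eq_zero_iff.mpr hi)).1.smul (hv i)

lemma IsMinuscule.pairing_eq_one (hω : D.IsMinuscule ω) (hw : w ∈ D.WI ω) {γ : V}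
    (hγ : γ ∈ D.Φ) (hγ₀ : D.IsNonnegComb γ) (hwγ : D.IsNonnegComb (-w γ)) :
    D.pairing ω γ = 1 := by
  rcases hω.2 γ hγ with h | h | h
  · linarith [hω.1.pairing_nonneg hγ₀]
  · have hwγ₀ := isNonnegComb_apply_of_pairing_eq_zero hω.1 hw hγ₀ h
    have : w γ = 0 := hwγ₀.eq_zero_of_neg hwγ
    exact absurd (w.map_eq_zero_iff.mp this) (D.root_ne_zero γ hγ)
  · exact h

variable {j : Fin D.l} {B : List (Fin D.l)}

lemma IsReduced.wordProd_mem_WI_of_cons (h : D.IsReduced (j :: B))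
    (hw : D.wordProd (j :: B) ∈ D.WI ω) : D.wordProd B ∈ D.WI ω := by
  set u := D.wordProd B
  have hu : u ∈ D.W := wordProd_mem_W B
  refine ⟨hu, fun i hi => ⟨?_, D.root_ne_zero _ (apply_mem_Φ_of_mem_W hu (D.α_mem i))⟩⟩
  have hpos : D.IsPos (D.s j (u (D.α i))) := by
    simpa only [wordProd_cons, LinearEquiv.mul_apply] using hw.2 i hi
  by_contra hneg
  have hroot : u (-D.α i) ∈ D.Φ := apply_mem_Φ_of_mem_W hu (neg_α_mem_Φ i)
  have hnonneg : D.IsNonnegComb (u (-D.α i)) := by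
    rw [map_neg]
    exact (isNonnegComb_or_neg (apply_mem_Φ_of_mem_W hu (D.α_mem i))).resolve_left hneg
  have huα : u (-D.α i) = D.α j := by
    refine eq_α_of_not_isNonnegComb_s_apply hroot hnonneg fun hs => hpos.2 ?_
    rw [map_neg, map_neg] at hs
    exact hpos.1.eq_zero_of_neg hs
  have hinv : u⁻¹ (D.α j) = -D.α i := (LinearEquiv.symm_apply_eq _).mpr huα.symm
  have hcontra : D.IsNonnegComb (-D.α i) := hinv ▸ h.isNonnegComb_inv_apply
  exact α_ne_zero i ((isNonnegComb_α i).eq_zero_of_neg hcontra)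

lemma IsMinuscule.s_apply_wordProd (hω : D.IsMinuscule ω) (h : D.IsReduced (j :: B))
    (hw : D.wordProd (j :: B) ∈ D.WI ω) :
    D.s j (D.wordProd B ω) = D.wordProd B ω - D.α j := by
  set u := D.wordProd B
  have hu : u ∈ D.W := wordProd_mem_W B
  have huα : u (u⁻¹ (D.α j)) = D.α j := u.apply_symm_apply _
  have hone : D.pairing ω (u⁻¹ (D.α j)) = 1 := by
    refine hω.pairing_eq_one hw (apply_mem_Φ_of_mem_W (inv_mem hu) (D.α_mem j))
      h.isNonnegComb_inv_apply ?_
    rw [wordProd_cons, LinearEquiv.mul_apply, huα, s_apply_α, neg_neg]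
    exact isNonnegComb_α j
  rw [← pairing_apply_apply_of_mem_W hu, huα] at hone
  rw [s_apply_eq_sub_pairing, hone, one_smul]

lemma IsMinuscule.repr_wordProd_apply (hω : D.IsMinuscule ω) {L : List (Fin D.l)}
    (hL : D.IsReduced L) (hw : D.wordProd L ∈ D.WI ω) (i : Fin D.l) :
    D.simpleBasis.repr (D.wordProd L ω) i = D.simpleBasis.repr ω i - L.count i := by
  induction L with
  | nil => simp [wordProd]
  | cons j B ih =>
    rw [wordProd_cons, LinearEquiv.mul_apply, hω.s_apply_wordProd hL hw, map_sub,
      Finsupp.sub_apply, ih hL.of_cons (hL.wordProd_mem_WI_of_cons hw), repr_α,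
      Finsupp.single_apply, List.count_cons]
    simp [sub_sub]

end MinimalCosetRepresentatives

end RootSystemWithBase

/-- Let `ω` be a minuscule weight and write `ω = ∑ m i • α i`.  For any
`w ∈ W^I` and any reduced expression `w = s_{i₁} ⋯ s_{i_k}`, the number of indices `j`
with `i_j = i` equals `m i` minus the coefficient of `α i` in `w(ω)`; in particular it is
independent of the chosen reduced expression. -/
theorem stmt2 {V : Type*} [NormedAddCommGroup V] [InnerProductSpace ℝ V]
    (D : RootSystemWithBase V) (ω : V) (hω : D.IsMinuscule ω)
    (m : Fin D.l → ℝ) (hm : ω = ∑ i, m i • D.α i)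
    (w : V ≃ₗ[ℝ] V) (hw : w ∈ D.WI ω)
    (L : List (Fin D.l)) (hL : D.wordProd L = w) (hred : L.length = D.len w)
    (c : Fin D.l → ℝ) (hc : w ω = ∑ i, c i • D.α i) (i : Fin D.l) :
    (L.count i : ℝ) = m i - c i := by
  subst hL
  have hcoeff := hω.repr_wordProd_apply hred hw i
  have hmi : D.simpleBasis.repr ω i = m i := by rw [hm, D.repr_sum_smul_α]
  rw [hc, D.repr_sum_smul_α, hmi] at hcoeff
  linarith
end
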